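/- arXiv:2011.03433 — 4 statements merged into one kernel-verified Lean document; each statement's English description precedes it below -/
import Mathlib

section
/- Let G be a finite simple graph, k a positive integer and c a positive integer. Then Σ_{ℓ=0}^{k} C(#E(G)−ℓ, k−ℓ) · T̃^ℓ_G(1−c, 0) equals the number of pairs (A, σ) where A ⊆ E(G) with |A| = k and σ : V(G) → Fin c is a proper c-colouring of the spanning subgraph (V(G), A), i.e. σ(a) ≠ σ(b) for every {a,b} ∈ A. -/
/-!
At `(1 - c, 0)` the summand of an edge set `A` is `(-1)^|A| c^{k(A)}`, and `c^{k(A)}` counts the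
maps `V → Fin c` for which every edge of `A` is monochromatic (`card_monochromatic`): such maps are
constant on components. Inclusion–exclusion over the monochromatic edges of `B`
then shows that `B` has `∑_{A ⊆ B} (-1)^|A| c^{k(A)}` proper colourings (`card_proper`). Summing
over all `B ⊆ E(G)` with `|B| = k` and exchanging the sums, each `A` with `|A| = ℓ` is counted once
for every `k`-set `B` between `A` and `E(G)`, that is `C(#E(G) - ℓ, k - ℓ)` times
(`card_between`).
-/

open SimpleGraph Finset

/-- `spanComp A` is the number of connected components of the spanning subgraph
`(V, A)` determined by a finite set `A` of (potential) edges. -/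
noncomputable def spanComp {V : Type*} (A : Finset (Sym2 V)) : ℕ :=
  Nat.card (SimpleGraph.fromEdgeSet (↑A : Set (Sym2 V))).ConnectedComponent

/-- The modified Tutte polynomial restricted to `ℓ`-edge subsets:
`T̃^ℓ_G(x,y) = Σ_{A ⊆ E(G), |A| = ℓ} (x−1)^{k(A)} · (y−1)^{k(A)+|A|}`. -/
noncomputable def mTutteK {V : Type*} [Fintype V] [DecidableEq V]
    (G : SimpleGraph V) [DecidableRel G.Adj] (ℓ : ℕ) (x y : ℚ) : ℚ :=
  ∑ A ∈ G.edgeFinset.powersetCard ℓ,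
    (x - 1) ^ spanComp A * (y - 1) ^ (spanComp A + ℓ)

/-- Maps that make every edge of `A` monochromatic correspond to maps on the set of components
of `(V, A)`. -/
lemma card_monochromatic {V : Type*} [Fintype V] [DecidableEq V] (A : Finset (Sym2 V)) (c : ℕ) :
    #{σ : V → Fin c | ∀ e ∈ A, (Sym2.map σ e).IsDiag} = c ^ spanComp A := by
  classical
  set H := SimpleGraph.fromEdgeSet (↑A : Set (Sym2 V)) with hH
  have key : ∀ σ : V → Fin c, (∀ e ∈ A, (Sym2.map σ e).IsDiag) →
      ∀ v w, H.Reachable v w → σ v = σ w := by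
    rintro σ h v w ⟨p⟩
    induction p with
    | nil => rfl
    | @cons u v _ hadj _ ih =>
      rw [← ih]
      exact Sym2.mk_isDiag_iff.1 (h s(u, v) (by simpa [hH] using hadj.1))
  have e : {σ : V → Fin c // ∀ e ∈ A, (Sym2.map σ e).IsDiag} ≃
      (H.ConnectedComponent → Fin c) :=
    { toFun := fun σ => Quot.lift σ.1 (key σ.1 σ.2)
      invFun := fun f => ⟨fun v => f (H.connectedComponentMk v), by
        intro e he
        induction e with
        | _ a b =>
          simp only [Sym2.map_mk, Sym2.mk_isDiag_iff]
          by_cases hab : a = b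
          · rw [hab]
          · congr 1
            apply ConnectedComponent.sound
            apply SimpleGraph.Adj.reachable
            simp [hH, he, hab]⟩
      left_inv := fun σ => rfl
      right_inv := fun f => by
        funext x
        induction x using ConnectedComponent.ind
        rfl }
  have := Nat.card_congr e
  rw [Nat.card_fun, Nat.card_eq_fintype_card, Fintype.card_subtype, Nat.card_fin] at this
  exact this

/-- Inclusion–exclusion: `[no edge of B is monochromatic]` equals the sum of `(-1)^|A|` over the
sets `A` of monochromatic edges of `B`. -/
lemma card_proper {V : Type*} [Fintype V] [DecidableEq V] (B : Finset (Sym2 V)) (c : ℕ) :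
    (#{σ : V → Fin c | ∀ e ∈ B, ¬ (Sym2.map σ e).IsDiag} : ℤ) =
      ∑ A ∈ B.powerset, (-1) ^ #A * (c : ℤ) ^ spanComp A := by
  classical
  have h1 : ∀ σ : V → Fin c, (if ∀ e ∈ B, ¬ (Sym2.map σ e).IsDiag then (1 : ℤ) else 0) =
      ∑ A ∈ B.powerset, if ∀ e ∈ A, (Sym2.map σ e).IsDiag then (-1) ^ #A else 0 := by
    intro σ
    have h2 : B.powerset.filter (fun A => ∀ e ∈ A, (Sym2.map σ e).IsDiag) =
        (B.filter fun e => (Sym2.map σ e).IsDiag).powerset := by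
      ext A
      simp only [mem_filter, mem_powerset, subset_iff]
      grind
    rw [← sum_filter, h2, sum_powerset_neg_one_pow_card]
    simp only [filter_eq_empty_iff]
  rw [card_filter]
  push_cast
  rw [sum_congr rfl fun σ _ => h1 σ, sum_comm]
  refine sum_congr rfl fun A _ => ?_
  rw [← sum_filter, sum_const, card_monochromatic]
  simp [mul_comm]

lemma card_between {α : Type*} [DecidableEq α] {A E : Finset α} {k : ℕ} (hA : A ⊆ E)
    (hk : #A ≤ k) : #{B ∈ E.powersetCard k | A ⊆ B} = (#E - #A).choose (k - #A) := by
  rw [← card_sdiff_of_subset hA, ← card_powersetCard]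
  refine card_nbij' (· \ A) (· ∪ A) ?_ ?_ ?_ ?_
  · intro B hB
    simp only [coe_filter, mem_powersetCard, Set.mem_ofPred_eq, mem_coe] at hB ⊢
    exact ⟨sdiff_subset_sdiff hB.1.1 subset_rfl, by rw [card_sdiff_of_subset hB.2, hB.1.2]⟩
  · intro C hC
    simp only [coe_filter, mem_powersetCard, Set.mem_ofPred_eq, mem_coe, subset_sdiff] at hC ⊢
    refine ⟨⟨union_subset hC.1.1 hA, ?_⟩, subset_union_right⟩
    rw [card_union_of_disjoint hC.1.2, hC.2]
    omega
  · intro B hB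
    simp only [coe_filter, Set.mem_ofPred_eq] at hB
    exact sdiff_union_of_subset hB.2
  · intro C hC
    simp only [mem_powersetCard, mem_coe, subset_sdiff] at hC
    exact union_sdiff_cancel_right hC.1.2

/-- `Σ_{ℓ=0}^{k} C(#E(G)−ℓ, k−ℓ) · T̃^ℓ_G(1−c, 0)` equals the number of pairs `(A, σ)`
where `A ⊆ E(G)` with `|A| = k` and `σ : V(G) → Fin c` is a proper `c`-colouring of the
spanning subgraph `(V(G), A)`. -/
theorem statement1 {V : Type*} [Fintype V] [DecidableEq V]
    (G : SimpleGraph V) [DecidableRel G.Adj] (k c : ℕ) (hk : 0 < k) (hc : 0 < c) :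
    ∑ ℓ ∈ Finset.range (k + 1),
        (Nat.choose (G.edgeFinset.card - ℓ) (k - ℓ) : ℚ) * mTutteK G ℓ (1 - (c : ℚ)) 0 =
      (Nat.card {p : Finset (Sym2 V) × (V → Fin c) //
        p.1 ⊆ G.edgeFinset ∧ p.1.card = k ∧
        ∀ a b : V, s(a, b) ∈ p.1 → p.2 a ≠ p.2 b} : ℚ) := by
  classical
  set E := G.edgeFinset
  let f : Finset (Sym2 V) → ℚ := fun A => (-1) ^ #A * (c : ℚ) ^ spanComp A
  have hR : Nat.card {p : Finset (Sym2 V) × (V → Fin c) //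
        p.1 ⊆ E ∧ p.1.card = k ∧ ∀ a b : V, s(a, b) ∈ p.1 → p.2 a ≠ p.2 b} =
      ∑ B ∈ E.powersetCard k, #{σ : V → Fin c | ∀ e ∈ B, ¬ (Sym2.map σ e).IsDiag} := by
    rw [Nat.card_eq_fintype_card, Fintype.card_subtype, ← card_sigma]
    refine card_nbij' (fun p => ⟨p.1, p.2⟩) (fun p => (p.1, p.2)) ?_ ?_ ?_ ?_
    · intro p hp
      simpa [Sym2.forall, and_assoc] using hp
    · intro p hp
      simpa [Sym2.forall, and_assoc] using hp
    · intro p _; rfl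
    · intro p _; rfl
  have hP : ∀ B : Finset (Sym2 V),
      (#{σ : V → Fin c | ∀ e ∈ B, ¬ (Sym2.map σ e).IsDiag} : ℚ) = ∑ A ∈ B.powerset, f A := by
    intro B
    simpa [f] using congrArg (Int.cast : ℤ → ℚ) (card_proper B c)
  -- both sides become a sum over pairs `A ⊆ B`, grouped by `ℓ = |A|` on the left
  have hL : ∀ ℓ ∈ range (k + 1),
      (Nat.choose (#E - ℓ) (k - ℓ) : ℚ) * mTutteK G ℓ (1 - (c : ℚ)) 0 =
        ∑ B ∈ E.powersetCard k, ∑ A ∈ B.powersetCard ℓ, f A := by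
    intro ℓ hℓ
    rw [mTutteK, mul_sum, sum_comm' (s' := fun A => {B ∈ E.powersetCard k | A ⊆ B})
      (t' := E.powersetCard ℓ)]
    · refine sum_congr rfl fun A hA => ?_
      obtain ⟨hAE, rfl⟩ := mem_powersetCard.1 hA
      rw [sum_const, card_between hAE (by simpa [Nat.lt_succ_iff] using hℓ), nsmul_eq_mul]
      congr 1
      simp only [f]
      rw [pow_add, ← mul_assoc, ← mul_pow]
      ring_nf
    · intro B A
      simp only [mem_powersetCard, mem_filter]
      exact ⟨fun h => ⟨⟨h.1, h.2.1⟩, h.2.1.trans h.1.1, h.2.2⟩, fun h => ⟨h.1.1, h.1.2, h.2.2⟩⟩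
  rw [hR, sum_congr rfl hL, sum_comm]
  push_cast
  refine sum_congr rfl fun B hB => ?_
  rw [hP, sum_powerset, (mem_powersetCard.1 hB).2]
end

section
/- Let G be a finite simple graph and k a positive integer. Then Σ_{ℓ=0}^{k} C(#E(G)−ℓ, k−ℓ) · T^ℓ_G(2, 0) equals the number of pairs (A, o) where A ⊆ E(G) with |A| = k and o is an acyclic orientation of the spanning subgraph (V(G), A). -/
/-!
At `(x, y) = (2, 0)` the summand of the Tutte polynomial is a sign, so after exchanging the order
of summation the left-hand side is `∑_{|A| = k} ∑_{B ⊆ A} (-1)^(|B| + k(B) - #V)`. It remains to see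
that the inner sum counts the acyclic orientations of `(V, A)`, which is Stanley's theorem on the
value of the chromatic polynomial at `-1`.

Stanley's theorem is proved by deletion and contraction, with contraction encoded by a second edge
set: `acycOr C D` is the set of orientations of `D` that are acyclic once the edges of `C` are
contracted, i.e. no arc of the orientation lies on a closed walk that follows arcs forwards and
edges of `C` in either direction. For an edge `e = {a, b} ∉ D`, there are no such orientations of
`D ∪ {e}` if `a` and `b` are connected in `C` (`acycOr_insert_of_conn`), and otherwise
`#acycOr C (D ∪ {e}) = #acycOr C D + #acycOr (C ∪ {e}) D` (`ncard_acycOr_insert`): an element of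
`acycOr C D` always extends to `e` in at least one direction, and it extends in both directions
exactly if it belongs to `acycOr (C ∪ {e}) D`. The signed sums satisfy the same recursion, because
adding `e` merges two components if `a` and `b` are not connected and changes nothing otherwise;
this gives `ncard_acycOr`.
-/

open SimpleGraph Finset

/-- The parameterized Tutte polynomial
`T^ℓ_G(x,y) = Σ_{A ⊆ E(G), |A| = ℓ} (x−1)^{k(A)−k(E(G))} · (y−1)^{k(A)+ℓ−#V(G)}`,
with natural-number exponents and the convention `0^0 = 1`. -/
noncomputable def pTutte {V : Type*} [Fintype V] [DecidableEq V]
    (G : SimpleGraph V) [DecidableRel G.Adj] (ℓ : ℕ) (x y : ℚ) : ℚ :=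
  ∑ A ∈ G.edgeFinset.powersetCard ℓ,
    (x - 1) ^ (spanComp A - spanComp G.edgeFinset) *
      (y - 1) ^ (spanComp A + ℓ - Fintype.card V)

/-! ### Walks and connected components -/

theorem walk_mono {V : Type*} {Q P : V → V → Prop} (hQP : ∀ u v, Q u v → P u v) {x y : V}
    (h : Relation.ReflTransGen Q x y) : Relation.ReflTransGen P x y :=
  Relation.ReflTransGen.mono hQP _ _ h

/-- A walk along `Q`-steps and `P`-steps either avoids `P`, or splits at its first and its last
`P`-step. -/
theorem walk_split {V : Type*} {Q P : V → V → Prop} {x y : V}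
    (h : Relation.ReflTransGen (fun u v => Q u v ∨ P u v) x y) :
    Relation.ReflTransGen Q x y ∨ ∃ p q p' q', P p q ∧ P p' q' ∧
      Relation.ReflTransGen Q x p ∧ Relation.ReflTransGen Q q' y := by
  induction h with
  | refl => exact Or.inl .refl
  | tail _ hs ih =>
    rcases hs with hs | hs
    · rcases ih with ih | ⟨p, q, p', q', h1, h2, h3, h4⟩
      · exact Or.inl (ih.tail hs)
      · exact Or.inr ⟨p, q, p', q', h1, h2, h3, h4.tail hs⟩
    · rcases ih with ih | ⟨p, q, p', q', h1, h2, h3, h4⟩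
      · exact Or.inr ⟨_, _, _, _, hs, hs, ih, .refl⟩
      · exact Or.inr ⟨p, q, _, _, h1, hs, h3, .refl⟩

theorem reachable_fromEdgeSet_iff {V : Type*} (C : Finset (Sym2 V)) (x y : V) :
    (SimpleGraph.fromEdgeSet (↑C : Set (Sym2 V))).Reachable x y ↔
      Relation.ReflTransGen (fun u v => s(u, v) ∈ C) x y := by
  rw [SimpleGraph.reachable_iff_reflTransGen]
  constructor
  · exact walk_mono fun u v h => by simpa using ((fromEdgeSet_adj _).1 h).1
  · intro h
    induction h with
    | refl => exact .refl
    | @tail u v _ hs ih =>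
      by_cases huv : u = v
      · exact huv ▸ ih
      · exact ih.tail ((fromEdgeSet_adj _).2 ⟨by simpa using hs, huv⟩)

theorem conn_symm {V : Type*} {C : Finset (Sym2 V)} {x y : V}
    (h : Relation.ReflTransGen (fun u v => s(u, v) ∈ C) x y) :
    Relation.ReflTransGen (fun u v => s(u, v) ∈ C) y x :=
  (reachable_fromEdgeSet_iff C y x).1 ((reachable_fromEdgeSet_iff C x y).2 h).symm

theorem conn_insert_split {V : Type*} [DecidableEq V] {C : Finset (Sym2 V)} {a b x y : V}
    (h : Relation.ReflTransGen (fun u v => s(u, v) ∈ insert s(a, b) C) x y) :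
    Relation.ReflTransGen (fun u v => s(u, v) ∈ C) x y ∨ ∃ p q, (p = a ∨ p = b) ∧ (q = a ∨ q = b) ∧
      Relation.ReflTransGen (fun u v => s(u, v) ∈ C) x p ∧
      Relation.ReflTransGen (fun u v => s(u, v) ∈ C) q y := by
  have h' : Relation.ReflTransGen (fun u v => s(u, v) ∈ C ∨ s(u, v) = s(a, b)) x y :=
    walk_mono (fun u v => by rw [Finset.mem_insert]; exact Or.symm) h
  rcases walk_split h' with h | ⟨p, q, p', q', h1, h2, h3, h4⟩
  · exact Or.inl h
  · refine Or.inr ⟨p, q', ?_, ?_, h3, h4⟩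
    · rcases Sym2.eq_iff.1 h1 with h | h <;> simp [h]
    · rcases Sym2.eq_iff.1 h2 with h | h <;> simp [h]

theorem fromEdgeSet_le_insert {V : Type*} [DecidableEq V] (C : Finset (Sym2 V)) (e : Sym2 V) :
    SimpleGraph.fromEdgeSet (↑C : Set (Sym2 V)) ≤
      SimpleGraph.fromEdgeSet (↑(insert e C) : Set (Sym2 V)) :=
  SimpleGraph.fromEdgeSet_mono (by simp)

theorem spanComp_insert_of_conn {V : Type*} [DecidableEq V] (C : Finset (Sym2 V)) {a b : V}
    (hab : Relation.ReflTransGen (fun u v => s(u, v) ∈ C) a b) :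
    spanComp (insert s(a, b) C) = spanComp C := by
  symm
  refine Nat.card_eq_of_bijective
    (SimpleGraph.ConnectedComponent.map (Hom.ofLE (fromEdgeSet_le_insert C s(a, b)))) ⟨?_, ?_⟩
  · intro c d
    induction c using SimpleGraph.ConnectedComponent.ind with | _ x
    induction d using SimpleGraph.ConnectedComponent.ind with | _ y
    simp only [ConnectedComponent.map_mk, Hom.coe_ofLE, id, ConnectedComponent.eq,
      reachable_fromEdgeSet_iff]
    intro h
    rcases conn_insert_split h with h | ⟨p, q, rfl | rfl, rfl | rfl, h1, h2⟩
    · exact h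
    · exact h1.trans h2
    · exact h1.trans (hab.trans h2)
    · exact h1.trans ((conn_symm hab).trans h2)
    · exact h1.trans h2
  · exact ConnectedComponent.surjective_map_ofLE _

theorem spanComp_insert_of_not_conn {V : Type*} [Finite V] [DecidableEq V]
    (C : Finset (Sym2 V)) {a b : V}
    (hab : ¬ Relation.ReflTransGen (fun u v => s(u, v) ∈ C) a b) :
    spanComp C = spanComp (insert s(a, b) C) + 1 := by
  classical
  have : Finite (SimpleGraph.fromEdgeSet (↑C : Set (Sym2 V))).ConnectedComponent := Quot.finite _
  let β := (SimpleGraph.fromEdgeSet (↑C : Set (Sym2 V))).connectedComponentMk b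
  have h1 : spanComp C = Nat.card {c // c ≠ β} + 1 := by
    rw [spanComp, ← Nat.card_congr (Equiv.optionSubtypeNe β), Finite.card_option]
  rw [h1]
  congr 1
  -- every component of the larger graph contains exactly one old component other than that of `b`
  refine Nat.card_eq_of_bijective (fun c : {c // c ≠ β} =>
    SimpleGraph.ConnectedComponent.map (Hom.ofLE (fromEdgeSet_le_insert C s(a, b))) c.1) ⟨?_, ?_⟩
  · rintro ⟨c, hc⟩ ⟨d, hd⟩
    induction c using SimpleGraph.ConnectedComponent.ind with | _ x
    induction d using SimpleGraph.ConnectedComponent.ind with | _ y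
    simp only [ConnectedComponent.map_mk, Hom.coe_ofLE, id, ConnectedComponent.eq,
      reachable_fromEdgeSet_iff, ne_eq, Subtype.mk.injEq, β] at hc hd ⊢
    intro h
    rcases conn_insert_split h with h | ⟨p, q, rfl | rfl, rfl | rfl, h1, h2⟩
    · exact h
    · exact h1.trans h2
    · exact absurd (conn_symm h2) hd
    · exact absurd h1 hc
    · exact absurd h1 hc
  · intro c
    induction c using SimpleGraph.ConnectedComponent.ind with | _ x
    by_cases hx : Relation.ReflTransGen (fun u v => s(u, v) ∈ C) x b
    · refine ⟨⟨SimpleGraph.connectedComponentMk _ a, ?_⟩, ?_⟩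
      · simpa only [ne_eq, β, ConnectedComponent.eq, reachable_fromEdgeSet_iff] using hab
      · simp only [ConnectedComponent.map_mk, Hom.coe_ofLE, id, ConnectedComponent.eq,
          reachable_fromEdgeSet_iff]
        exact .head (Finset.mem_insert_self _ _)
          (walk_mono (fun u v h => Finset.mem_insert_of_mem h) (conn_symm hx))
    · refine ⟨⟨SimpleGraph.connectedComponentMk _ x, ?_⟩, ?_⟩
      · simpa only [ne_eq, β, ConnectedComponent.eq, reachable_fromEdgeSet_iff] using hx
      · simp

theorem spanComp_empty {V : Type*} [Fintype V] :
    spanComp (∅ : Finset (Sym2 V)) = Fintype.card V := by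
  rw [← Nat.card_eq_fintype_card]
  symm
  refine Nat.card_eq_of_bijective
    (SimpleGraph.connectedComponentMk _) ⟨?_, Quot.mk_surjective⟩
  intro x y h
  rw [ConnectedComponent.eq, reachable_fromEdgeSet_iff] at h
  induction h with
  | refl => rfl
  | tail _ h => simp at h

theorem card_le_spanComp_add {V : Type*} [Fintype V] [DecidableEq V] (B : Finset (Sym2 V)) :
    Fintype.card V ≤ spanComp B + B.card := by
  induction B using Finset.induction_on with
  | empty => simp [spanComp_empty]
  | insert e B he ih =>
    induction e using Sym2.ind with | _ a b
    rw [Finset.card_insert_of_notMem he]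
    by_cases h : Relation.ReflTransGen (fun u v => s(u, v) ∈ B) a b
    · have := spanComp_insert_of_conn B h
      omega
    · have := spanComp_insert_of_not_conn B h
      omega

/-! ### Acyclic orientations with contracted edges -/

/-- `Reach C R x y`: there is a walk from `x` to `y` that follows arcs of `R` forwards and edges
of `C` in either direction. -/
def Reach {V : Type*} (C : Finset (Sym2 V)) (R : V → V → Prop) : V → V → Prop :=
  Relation.ReflTransGen (fun x y => s(x, y) ∈ C ∨ R x y)

/-- The orientations `R` of the edge set `D` that become acyclic orientations after contracting
the edges of `C`: no arc of `R` can be completed to a closed walk using arcs of `R` and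
edges of `C`. -/
def acycOr {V : Type*} (C D : Finset (Sym2 V)) : Set (V → V → Prop) :=
  {R | (∀ a b, R a b → s(a, b) ∈ D) ∧ (∀ a b, s(a, b) ∈ D → (R a b ↔ ¬ R b a)) ∧
    ∀ a b, R a b → ¬ Reach C R b a}

theorem Reach.mono {V : Type*} {C C' : Finset (Sym2 V)} {R R' : V → V → Prop} (hC : C ⊆ C')
    (hR : ∀ x y, R x y → R' x y) {x y : V} (h : Reach C R x y) : Reach C' R' x y :=
  walk_mono (fun u v => Or.imp (@hC _) (hR u v)) h

theorem Reach.of_conn {V : Type*} {C : Finset (Sym2 V)} {R : V → V → Prop} {x y : V}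
    (h : Relation.ReflTransGen (fun u v => s(u, v) ∈ C) x y) : Reach C R x y :=
  walk_mono (fun _ _ => Or.inl) h

theorem Reach.arc {V : Type*} {C : Finset (Sym2 V)} {R : V → V → Prop} {x y : V}
    (h : R x y) : Reach C R x y :=
  .single (Or.inr h)

theorem Reach.comp {V : Type*} {C : Finset (Sym2 V)} {R : V → V → Prop} {x y z : V}
    (h : Reach C R x y) (h' : Reach C R y z) : Reach C R x z :=
  Relation.ReflTransGen.trans h h'

theorem Reach.conn_or_arc {V : Type*} {C : Finset (Sym2 V)} {R : V → V → Prop} {x y : V}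
    (h : Reach C R x y) : Relation.ReflTransGen (fun u v => s(u, v) ∈ C) x y ∨
      ∃ p q, R p q ∧ Reach C R x p ∧ Reach C R q y := by
  induction h with
  | refl => exact Or.inl .refl
  | tail h hs ih =>
    rcases hs with hs | hs
    · rcases ih with ih | ⟨p, q, h1, h2, h3⟩
      · exact Or.inl (ih.tail hs)
      · exact Or.inr ⟨p, q, h1, h2, h3.tail (Or.inl hs)⟩
    · exact Or.inr ⟨_, _, hs, h, .refl⟩

theorem acycOr_insert_of_conn {V : Type*} [DecidableEq V] (C D : Finset (Sym2 V)) {a b : V}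
    (hab : Relation.ReflTransGen (fun u v => s(u, v) ∈ C) a b) :
    acycOr C (insert s(a, b) D) = ∅ := by
  rw [Set.eq_empty_iff_forall_notMem]
  rintro R ⟨-, h2, h3⟩
  have h := h2 a b (Finset.mem_insert_self _ _)
  by_cases hR : R a b
  · exact h3 a b hR (.of_conn (conn_symm hab))
  · exact h3 b a (by tauto) (.of_conn hab)

/-- The elements of `acycOr C (D ∪ {ab})` that orient the new edge from `a` to `b` are the
extensions of those elements of `acycOr C D` in which `b` does not reach `a`. -/
theorem acycOr_insert_inter_arc {V : Type*} [DecidableEq V] (C D : Finset (Sym2 V)) {a b : V}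
    (hne : a ≠ b) (hD : s(a, b) ∉ D) :
    acycOr C (insert s(a, b) D) ∩ {R | R a b} =
      (fun (R : V → V → Prop) x y => R x y ∨ (x = a ∧ y = b)) ''
        (acycOr C D ∩ {R | ¬ Reach C R b a}) := by
  ext R
  constructor
  · rintro ⟨⟨h1, h2, h3⟩, hR⟩
    have hR : R a b := hR
    have hba : ¬ R b a := (h2 a b (Finset.mem_insert_self _ _)).1 hR
    have hmono : ∀ x y, (R x y ∧ s(x, y) ≠ s(a, b)) → R x y := fun _ _ h => h.1
    refine ⟨fun x y => R x y ∧ s(x, y) ≠ s(a, b), ⟨⟨?_, ?_, ?_⟩, ?_⟩, ?_⟩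
    · rintro x y ⟨h, hn⟩
      exact Finset.mem_of_mem_insert_of_ne (h1 x y h) hn
    · intro x y h
      have hn : s(x, y) ≠ s(a, b) := fun he => hD (he ▸ h)
      have hn' : s(y, x) ≠ s(a, b) := by rwa [Sym2.eq_swap]
      have := h2 x y (Finset.mem_insert_of_mem h)
      tauto
    · rintro x y ⟨h, -⟩ h'
      exact h3 x y h (h'.mono subset_rfl hmono)
    · intro h'
      exact h3 a b hR (h'.mono subset_rfl hmono)
    · ext x y
      constructor
      · rintro (h | ⟨rfl, rfl⟩)
        · exact h.1
        · exact hR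
      · intro h
        by_cases he : s(x, y) = s(a, b)
        · rcases Sym2.eq_iff.1 he with he | ⟨rfl, rfl⟩
          · exact Or.inr he
          · exact absurd h hba
        · exact Or.inl ⟨h, he⟩
  · rintro ⟨R, ⟨⟨h1, h2, h3⟩, hR⟩, rfl⟩
    have hR : ¬ Reach C R b a := hR
    have hRab : ¬ R a b := fun h => hD (h1 _ _ h)
    have hRba : ¬ R b a := fun h => hD (by rw [Sym2.eq_swap]; exact h1 _ _ h)
    have split : ∀ x y, Reach C (fun x y => R x y ∨ (x = a ∧ y = b)) x y →
        Reach C R x y ∨ (Reach C R x a ∧ Reach C R b y) := by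
      intro x y h
      have h' : Relation.ReflTransGen
          (fun u v => (s(u, v) ∈ C ∨ R u v) ∨ (u = a ∧ v = b)) x y :=
        walk_mono (fun u v h => or_assoc.2 h) h
      rcases walk_split h' with h | ⟨p, q, p', q', ⟨rfl, rfl⟩, ⟨rfl, rfl⟩, h3, h4⟩
      · exact Or.inl h
      · exact Or.inr ⟨h3, h4⟩
    refine ⟨⟨?_, ?_, ?_⟩, Or.inr ⟨rfl, rfl⟩⟩
    · rintro x y (h | ⟨rfl, rfl⟩)
      · exact Finset.mem_insert_of_mem (h1 x y h)
      · exact Finset.mem_insert_self _ _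
    · intro x y h
      by_cases he : s(x, y) = s(a, b)
      · rcases Sym2.eq_iff.1 he with ⟨rfl, rfl⟩ | ⟨rfl, rfl⟩
        · simp [hRab, hRba, hne]
        · simp [hRab, hRba, hne]
      · have hn : ¬ (x = a ∧ y = b) := fun hh => he (by rw [hh.1, hh.2])
        have hn' : ¬ (y = a ∧ x = b) := fun hh => he (by rw [hh.1, hh.2, Sym2.eq_swap])
        have := h2 x y (Finset.mem_of_mem_insert_of_ne h he)
        tauto
    · rintro x y (h | ⟨rfl, rfl⟩) h'
      · rcases split _ _ h' with h' | ⟨h', h''⟩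
        · exact h3 x y h h'
        · exact hR (h''.comp ((Reach.arc h).comp h'))
      · rcases split _ _ h' with h' | ⟨h', -⟩
        · exact hR h'
        · exact hR h'

theorem ncard_acycOr_insert_inter_arc {V : Type*} [DecidableEq V]
    (C D : Finset (Sym2 V)) {a b : V} (hne : a ≠ b) (hD : s(a, b) ∉ D) :
    (acycOr C (insert s(a, b) D) ∩ {R | R a b}).ncard =
      (acycOr C D ∩ {R | ¬ Reach C R b a}).ncard := by
  rw [acycOr_insert_inter_arc C D hne hD]
  refine Set.InjOn.ncard_image ?_
  rintro R ⟨⟨hR, -⟩, -⟩ S ⟨⟨hS, -⟩, -⟩ h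
  ext x y
  have hxy : (R x y ∨ (x = a ∧ y = b)) ↔ (S x y ∨ (x = a ∧ y = b)) :=
    iff_of_eq (congrFun (congrFun h x) y)
  by_cases he : x = a ∧ y = b
  · obtain ⟨rfl, rfl⟩ := he
    exact iff_of_false (fun h => hD (hR _ _ h)) (fun h => hD (hS _ _ h))
  · simpa [he] using hxy

/-- Contracting a further edge `ab` keeps exactly those orientations in which neither end of the
edge reaches the other. -/
theorem acycOr_contract {V : Type*} [DecidableEq V] (C D : Finset (Sym2 V)) {a b : V}
    (hab : ¬ Relation.ReflTransGen (fun u v => s(u, v) ∈ C) a b) :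
    acycOr (insert s(a, b) C) D =
      (acycOr C D ∩ {R | ¬ Reach C R b a}) ∩ (acycOr C D ∩ {R | ¬ Reach C R a b}) := by
  have hsub : C ⊆ insert s(a, b) C := Finset.subset_insert _ _
  ext R
  constructor
  · rintro ⟨h1, h2, h3⟩
    have hacyc : R ∈ acycOr C D :=
      ⟨h1, h2, fun x y h h' => h3 x y h (h'.mono hsub fun _ _ => id)⟩
    have hA : Reach (insert s(a, b) C) R a b := .single (Or.inl (Finset.mem_insert_self _ _))
    have hB : Reach (insert s(a, b) C) R b a :=
      .single (Or.inl (by rw [Sym2.eq_swap]; exact Finset.mem_insert_self _ _))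
    refine ⟨⟨hacyc, fun h => ?_⟩, ⟨hacyc, fun h => ?_⟩⟩
    · rcases h.conn_or_arc with h | ⟨p, q, hpq, h, h'⟩
      · exact hab (conn_symm h)
      · exact h3 p q hpq ((h'.mono hsub fun _ _ => id).comp
          (hA.comp (h.mono hsub fun _ _ => id)))
    · rcases h.conn_or_arc with h | ⟨p, q, hpq, h, h'⟩
      · exact hab h
      · exact h3 p q hpq ((h'.mono hsub fun _ _ => id).comp
          (hB.comp (h.mono hsub fun _ _ => id)))
  · rintro ⟨⟨⟨h1, h2, h3⟩, hba⟩, ⟨-, hab'⟩⟩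
    have hba : ¬ Reach C R b a := hba
    have hab' : ¬ Reach C R a b := hab'
    refine ⟨h1, h2, fun x y h h' => ?_⟩
    have h'' : Relation.ReflTransGen
        (fun u v => (s(u, v) ∈ C ∨ R u v) ∨ s(u, v) = s(a, b)) y x := by
      refine walk_mono (fun u v h => ?_) h'
      rw [Finset.mem_insert] at h
      tauto
    rcases walk_split h'' with h'' | ⟨p, q, p', q', hp, hq, h3', h4'⟩
    · exact h3 x y h h''
    · have key : Reach C R q' p := Reach.comp h4' ((Reach.arc h).comp h3')
      rcases Sym2.eq_iff.1 hp with ⟨rfl, rfl⟩ | ⟨rfl, rfl⟩ <;>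
        rcases Sym2.eq_iff.1 hq with ⟨rfl, rfl⟩ | ⟨rfl, rfl⟩
      · exact hba key
      · exact h3 x y h (Reach.comp h3' h4')
      · exact h3 x y h (Reach.comp h3' h4')
      · exact hab' key

/-- Deletion–contraction for `acycOr`. -/
theorem ncard_acycOr_insert {V : Type*} [Finite V] [DecidableEq V] (C D : Finset (Sym2 V)) {a b : V}
    (hab : ¬ Relation.ReflTransGen (fun u v => s(u, v) ∈ C) a b) (hD : s(a, b) ∉ D) :
    (acycOr C (insert s(a, b) D)).ncard =
      (acycOr C D).ncard + (acycOr (insert s(a, b) C) D).ncard := by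
  have hne : a ≠ b := by
    rintro rfl
    exact hab .refl
  have hsplit : acycOr C (insert s(a, b) D) =
      (acycOr C (insert s(a, b) D) ∩ {R | R a b}) ∪
        (acycOr C (insert s(a, b) D) ∩ {R | R b a}) := by
    rw [← Set.inter_union_distrib_left]
    refine (Set.inter_eq_left.2 ?_).symm
    rintro R ⟨-, h2, -⟩
    have := h2 a b (Finset.mem_insert_self _ _)
    simp only [Set.mem_union, Set.mem_ofPred_eq]
    tauto
  have hdisj : Disjoint (acycOr C (insert s(a, b) D) ∩ {R | R a b})
      (acycOr C (insert s(a, b) D) ∩ {R | R b a}) := by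
    rw [Set.disjoint_left]
    rintro R ⟨⟨-, h2, -⟩, h⟩ ⟨-, hrev⟩
    exact (h2 a b (Finset.mem_insert_self _ _)).1 h hrev
  -- at least one of the two ways to orient `ab` is always available
  have hunion : (acycOr C D ∩ {R | ¬ Reach C R b a}) ∪ (acycOr C D ∩ {R | ¬ Reach C R a b}) =
      acycOr C D := by
    rw [← Set.inter_union_distrib_left]
    refine Set.inter_eq_left.2 ?_
    rintro R ⟨-, -, h3⟩
    simp only [Set.mem_union, Set.mem_ofPred_eq]
    by_contra! hcon
    rcases hcon.2.conn_or_arc with h | ⟨p, q, hpq, h, h'⟩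
    · exact hab h
    · exact h3 p q hpq (h'.comp (hcon.1.comp h))
  have h1 := ncard_acycOr_insert_inter_arc C D hne hD
  have h2 := ncard_acycOr_insert_inter_arc C D hne.symm (by rwa [Sym2.eq_swap])
  rw [Sym2.eq_swap] at h2
  rw [hsplit, Set.ncard_union_eq hdisj (Set.toFinite _) (Set.toFinite _), h1, h2,
    ← Set.ncard_union_add_ncard_inter _ _ (Set.toFinite _) (Set.toFinite _), hunion,
    acycOr_contract C D hab]

/-- Stanley's theorem, for the graph with edges `D` on the components of `C`. The exponent has the
parity of `|B| + k(C ∪ B) - k(C)`. -/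
theorem ncard_acycOr {V : Type*} [Finite V] [DecidableEq V] (D : Finset (Sym2 V)) :
    ∀ C : Finset (Sym2 V), ((acycOr C D).ncard : ℚ) =
      ∑ B ∈ D.powerset, (-1) ^ (B.card + spanComp (C ∪ B) + spanComp C) := by
  induction D using Finset.induction_on with
  | empty =>
    intro C
    have : acycOr C (∅ : Finset (Sym2 V)) = {fun _ _ => False} := by
      ext R
      constructor
      · rintro ⟨h1, -⟩
        ext x y
        simpa using h1 x y
      · rintro rfl
        simp [acycOr]
    rw [this]
    simp [← two_mul]
  | insert e D he ih =>
    intro C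
    induction e using Sym2.ind with | _ a b
    rw [Finset.sum_powerset_insert he]
    by_cases hab : Relation.ReflTransGen (fun u v => s(u, v) ∈ C) a b
    · rw [acycOr_insert_of_conn C D hab, ← Finset.sum_add_distrib]
      symm
      rw [Set.ncard_empty, Nat.cast_zero]
      refine Finset.sum_eq_zero fun B hB => ?_
      have heB : s(a, b) ∉ B := fun h => he (Finset.mem_powerset.1 hB h)
      rw [Finset.card_insert_of_notMem heB, Finset.union_insert,
        spanComp_insert_of_conn (C ∪ B)
          (walk_mono (fun u v h => Finset.mem_union_left _ h) hab)]
      ring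
    · rw [ncard_acycOr_insert C D hab he, Nat.cast_add, ih C, ih (insert s(a, b) C)]
      congr 1
      refine Finset.sum_congr rfl fun B hB => ?_
      have heB : s(a, b) ∉ B := fun h => he (Finset.mem_powerset.1 hB h)
      rw [Finset.card_insert_of_notMem heB, Finset.union_insert, Finset.insert_union,
        spanComp_insert_of_not_conn C hab]
      ring

/-! ### Summation over edge sets of fixed size -/

theorem card_supersets {α : Type*} [DecidableEq α] (E B : Finset α) (hB : B ⊆ E) (k : ℕ)
    (hk : B.card ≤ k) :
    ((E.powersetCard k).filter (fun A => B ⊆ A)).card = (E.card - B.card).choose (k - B.card) := by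
  rw [← Finset.card_sdiff_of_subset hB, ← Finset.card_powersetCard]
  symm
  refine Finset.card_bij' (fun A _ => A ∪ B) (fun A _ => A \ B) ?_ ?_ ?_ ?_
  · intro A hA
    rw [Finset.mem_powersetCard] at hA
    have hd : Disjoint A B := Finset.disjoint_of_subset_left hA.1 Finset.sdiff_disjoint
    rw [Finset.mem_filter, Finset.mem_powersetCard, Finset.card_union_of_disjoint hd]
    exact ⟨⟨Finset.union_subset (hA.1.trans Finset.sdiff_subset) hB, by omega⟩,
      Finset.subset_union_right⟩
  · intro A hA
    rw [Finset.mem_filter, Finset.mem_powersetCard] at hA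
    rw [Finset.mem_powersetCard, Finset.card_sdiff_of_subset hA.2]
    exact ⟨Finset.sdiff_subset_sdiff hA.1.1 subset_rfl, by omega⟩
  · intro A hA
    rw [Finset.mem_powersetCard] at hA
    have hd : Disjoint A B := Finset.disjoint_of_subset_left hA.1 Finset.sdiff_disjoint
    exact Finset.union_sdiff_cancel_right hd
  · intro A hA
    rw [Finset.mem_filter] at hA
    exact Finset.sdiff_union_of_subset hA.2

theorem sum_powersetCard_sum_powerset {α : Type*} [DecidableEq α] (E : Finset α) (k : ℕ)
    (f : Finset α → ℚ) :
    ∑ A ∈ E.powersetCard k, ∑ B ∈ A.powerset, f B =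
      ∑ ℓ ∈ Finset.range (k + 1), ((E.card - ℓ).choose (k - ℓ) : ℚ) *
        ∑ B ∈ E.powersetCard ℓ, f B := by
  have h1 : ∀ A ∈ E.powersetCard k, ∑ B ∈ A.powerset, f B =
      ∑ ℓ ∈ Finset.range (k + 1), ∑ B ∈ A.powersetCard ℓ, f B := by
    intro A hA
    rw [Finset.sum_powerset, (Finset.mem_powersetCard.1 hA).2]
  rw [Finset.sum_congr rfl h1, Finset.sum_comm]
  refine Finset.sum_congr rfl fun ℓ hℓ => ?_
  rw [Finset.sum_comm' (t' := E.powersetCard ℓ)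
    (s' := fun B => (E.powersetCard k).filter (fun A => B ⊆ A)), Finset.mul_sum]
  · refine Finset.sum_congr rfl fun B hB => ?_
    rw [Finset.mem_powersetCard] at hB
    rw [Finset.mem_range] at hℓ
    rw [Finset.sum_const, card_supersets E B hB.1 k (by omega), hB.2, nsmul_eq_mul]
  · intro A B
    simp only [Finset.mem_powersetCard, Finset.mem_filter]
    constructor
    · rintro ⟨⟨h1, h2⟩, h3, h4⟩
      exact ⟨⟨⟨h1, h2⟩, h3⟩, h3.trans h1, h4⟩
    · rintro ⟨⟨⟨h1, h2⟩, h3⟩, -, h4⟩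
      exact ⟨⟨h1, h2⟩, h3, h4⟩

theorem acyclic_iff {V : Type*} (R : V → V → Prop) :
    (∀ a, ¬ Relation.TransGen R a a) ↔ ∀ a b, R a b → ¬ Reach ∅ R b a := by
  have : Reach ∅ R = Relation.ReflTransGen R := by simp [Reach]
  simp only [this, Relation.TransGen.head'_iff, not_exists, not_and]

/-- `Σ_{ℓ=0}^{k} C(#E(G)−ℓ, k−ℓ) · T^ℓ_G(2, 0)` equals the number of pairs `(A, o)` where
`A ⊆ E(G)` with `|A| = k` and `o` is an acyclic orientation of the spanning subgraph
`(V(G), A)`.  An orientation is encoded as a relation `R` on `V(G)` which holds only on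
pairs forming edges of `A`, contains exactly one of `(a,b)`, `(b,a)` for each edge
`{a,b} ∈ A`, and whose transitive closure is irreflexive. -/
theorem statement2 {V : Type*} [Fintype V] [DecidableEq V]
    (G : SimpleGraph V) [DecidableRel G.Adj] (k : ℕ) (hk : 0 < k) :
    ∑ ℓ ∈ Finset.range (k + 1),
        (Nat.choose (G.edgeFinset.card - ℓ) (k - ℓ) : ℚ) * pTutte G ℓ 2 0 =
      (Nat.card {p : Finset (Sym2 V) × (V → V → Prop) //
        p.1 ⊆ G.edgeFinset ∧ p.1.card = k ∧
        (∀ a b : V, p.2 a b → s(a, b) ∈ p.1) ∧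
        (∀ a b : V, s(a, b) ∈ p.1 → (p.2 a b ↔ ¬ p.2 b a)) ∧
        (∀ a : V, ¬ Relation.TransGen p.2 a a)} : ℚ) := by
  have hcount : Nat.card {p : Finset (Sym2 V) × (V → V → Prop) //
        p.1 ⊆ G.edgeFinset ∧ p.1.card = k ∧
        (∀ a b : V, p.2 a b → s(a, b) ∈ p.1) ∧
        (∀ a b : V, s(a, b) ∈ p.1 → (p.2 a b ↔ ¬ p.2 b a)) ∧
        (∀ a : V, ¬ Relation.TransGen p.2 a a)} =
      ∑ A ∈ G.edgeFinset.powersetCard k, (acycOr ∅ A).ncard := by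
    rw [← Finset.sum_coe_sort]
    simp only [← Nat.card_coe_set_eq]
    rw [← Nat.card_sigma]
    refine Nat.card_congr
      { toFun := fun p => ⟨⟨p.1.1, Finset.mem_powersetCard.2 ⟨p.2.1, p.2.2.1⟩⟩, ⟨p.1.2,
          p.2.2.2.1, p.2.2.2.2.1, (acyclic_iff _).1 p.2.2.2.2.2⟩⟩
        invFun := fun q => ⟨(q.1.1, q.2.1), (Finset.mem_powersetCard.1 q.1.2).1,
          (Finset.mem_powersetCard.1 q.1.2).2, q.2.2.1, q.2.2.2.1, (acyclic_iff _).2 q.2.2.2.2⟩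
        left_inv := fun _ => rfl
        right_inv := fun _ => rfl }
  rw [hcount, Nat.cast_sum, Finset.sum_congr rfl fun A _ => ncard_acycOr A ∅,
    sum_powersetCard_sum_powerset]
  refine Finset.sum_congr rfl fun ℓ _ => ?_
  rw [pTutte]
  congr 1
  refine Finset.sum_congr rfl fun B hB => ?_
  have hc := (Finset.mem_powersetCard.1 hB).2
  obtain ⟨d, hd⟩ := Nat.exists_eq_add_of_le (card_le_spanComp_add B)
  rw [Finset.empty_union, spanComp_empty, ← hc, hd, Nat.add_sub_cancel_left,
    show B.card + spanComp B + Fintype.card V = d + 2 * Fintype.card V by omega, pow_add, pow_mul]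
  norm_num
end

section
/- Let G be a finite simple graph, x, y rationals, and k ≥ 0. Then Σ_{ℓ=0}^{k} C(#E(G)−ℓ, k−ℓ) · T̃^ℓ_G(x,y) = Σ_{A ⊆ E(G), |A| = k} T̃_{G(A)}(x,y), where T̃_{G(A)}(x,y) = Σ_{B ⊆ A} (x−1)^{k(B)} · (y−1)^{k(B)+|B|}. -/
/-!
Both sides sum the weight `(x-1)^{k(B)} (y-1)^{k(B)+|B|}` over edge sets `B`, each with a
multiplicity. On the right, `B` occurs once for every `k`-element `A` with `B ⊆ A ⊆ E(G)`, and
there are `C(#E(G) - |B|, k - |B|)` of these, since `A` is determined by `A \ B`. The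
identity follows by grouping the inner sums by `ℓ = |B|` and exchanging the order of summation,
which is done for an arbitrary weight in `sum_powersetCard_powersetCard`.
-/

open SimpleGraph Finset

/-- Double counting of the pairs `B ⊆ A ⊆ S` with `|B| = ℓ` and `|A| = k`, weighted by `f B`. -/
lemma sum_powersetCard_powersetCard {α : Type*} [DecidableEq α] (S : Finset α)
    (f : Finset α → ℚ) {k ℓ : ℕ} (hk : ℓ ≤ k) :
    ∑ A ∈ S.powersetCard k, ∑ B ∈ A.powersetCard ℓ, f B =
      (Nat.choose (S.card - ℓ) (k - ℓ) : ℚ) * ∑ B ∈ S.powersetCard ℓ, f B := by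
  rw [Finset.sum_comm' (t' := S.powersetCard ℓ)
    (s' := fun B => (S.powersetCard k).filter (fun A => B ⊆ A)), Finset.mul_sum]
  · refine Finset.sum_congr rfl fun B hB => ?_
    obtain ⟨hBS, rfl⟩ := Finset.mem_powersetCard.mp hB
    rw [Finset.sum_const, Finset.card_filter_powersetCard_subset _ _ _ hBS hk, nsmul_eq_mul]
  · intro A B
    simp only [Finset.mem_powersetCard, Finset.mem_filter]
    constructor
    · rintro ⟨⟨hA, hc⟩, hBA, hb⟩
      exact ⟨⟨⟨hA, hc⟩, hBA⟩, hBA.trans hA, hb⟩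
    · rintro ⟨⟨h, hBA⟩, -, hb⟩
      exact ⟨h, hBA, hb⟩

/-- `Σ_{ℓ=0}^{k} C(#E(G)−ℓ, k−ℓ) · T̃^ℓ_G(x,y) = Σ_{A ⊆ E(G), |A| = k} T̃_{G(A)}(x,y)`,
where `T̃_{G(A)}(x,y) = Σ_{B ⊆ A} (x−1)^{k(B)} · (y−1)^{k(B)+|B|}` with components
counted in the spanning subgraph `(V(G), B)`. -/
theorem statement7 {V : Type*} [Fintype V] [DecidableEq V]
    (G : SimpleGraph V) [DecidableRel G.Adj] (x y : ℚ) (k : ℕ) :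
    ∑ ℓ ∈ Finset.range (k + 1),
        (Nat.choose (G.edgeFinset.card - ℓ) (k - ℓ) : ℚ) * mTutteK G ℓ x y =
      ∑ A ∈ G.edgeFinset.powersetCard k,
        ∑ B ∈ A.powerset, (x - 1) ^ spanComp B * (y - 1) ^ (spanComp B + B.card) := by
  have hgroup : ∀ A ∈ G.edgeFinset.powersetCard k,
      ∑ B ∈ A.powerset, (x - 1) ^ spanComp B * (y - 1) ^ (spanComp B + B.card) =
        ∑ ℓ ∈ Finset.range (k + 1), ∑ B ∈ A.powersetCard ℓ,
          (x - 1) ^ spanComp B * (y - 1) ^ (spanComp B + B.card) := by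
    intro A hA
    rw [Finset.sum_powerset, (Finset.mem_powersetCard.mp hA).2]
  rw [Finset.sum_congr rfl hgroup, Finset.sum_comm]
  refine Finset.sum_congr rfl fun ℓ hℓ => ?_
  rw [sum_powersetCard_powersetCard _ _ (Nat.lt_succ_iff.mp (Finset.mem_range.mp hℓ)), mTutteK]
  congr 1
  refine Finset.sum_congr rfl fun B hB => ?_
  rw [(Finset.mem_powersetCard.mp hB).2]
end

section
/- Let k ≥ 4 and let r be a positive integer with the Ramsey property for k: every simple graph on r vertices contains a clique of size k or an independent set of size k. Then every finite simple graph G with at least r edges contains k pairwise disjoint edges (a matching of size k) or a vertex of degree at least k (equivalently, G contains the star K_{1,k} as a subgraph). -/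
/-!
The Ramsey property is applied to the intersection graph of `r` edges of `G`, in which two distinct
edges are adjacent when they share an endpoint. An independent set of size `k` is a matching of
size `k`. A clique of size `k ≥ 4` is a family of pairwise intersecting edges; since such a family
is either contained in a triangle or has a common endpoint (`exists_common_vertex`), it is a star,
whose centre has degree at least `k`.
-/

open SimpleGraph Finset

/-- A pairwise intersecting family of at least four edges has a common endpoint: the only other
possibility is a triangle, which has three edges. -/
lemma exists_common_vertex {V : Type*} [DecidableEq V] (T : Finset (Sym2 V)) (hT : 4 ≤ T.card)
    (hint : ∀ e ∈ T, ∀ f ∈ T, ∃ v, v ∈ e ∧ v ∈ f) : ∃ v, ∀ e ∈ T, v ∈ e := by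
  obtain ⟨e, he⟩ : T.Nonempty := Finset.card_pos.mp (by omega)
  induction e with
  | _ a b =>
  by_contra! hcon
  obtain ⟨f, hf, haf⟩ := hcon a
  obtain ⟨g, hg, hbg⟩ := hcon b
  have hbf : b ∈ f := by
    obtain ⟨v, hv, hvf⟩ := hint _ he f hf
    rcases Sym2.mem_iff.mp hv with rfl | rfl <;> [exact absurd hvf haf; exact hvf]
  have hag : a ∈ g := by
    obtain ⟨v, hv, hvg⟩ := hint _ he g hg
    rcases Sym2.mem_iff.mp hv with rfl | rfl <;> [exact hvg; exact absurd hvg hbg]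
  obtain ⟨c, rfl⟩ := hbf
  obtain ⟨d, rfl⟩ := hag
  -- The edges `bc` and `ad` meet, and this forces `c = d`, so `a`, `b`, `c` form a triangle.
  have hcd : c = d := by
    obtain ⟨v, hv, hv'⟩ := hint _ hf _ hg
    simp only [Sym2.mem_iff] at *
    grind
  subst hcd
  have hsub : T ⊆ {s(a, b), s(b, c), s(a, c)} := by
    intro h hh
    obtain ⟨x, hx, hx'⟩ := hint _ hh _ he
    obtain ⟨y, hy, hy'⟩ := hint _ hh _ hf
    obtain ⟨z, hz, hz'⟩ := hint _ hh _ hg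
    induction h with
    | _ p q =>
    simp only [Sym2.mem_iff, Finset.mem_insert, Finset.mem_singleton, Sym2.eq_iff] at *
    grind
  have := (Finset.card_le_card hsub).trans Finset.card_le_three
  omega

/-- Let `k ≥ 4` and let `r` have the diagonal Ramsey property for `k` (every simple
graph on `r` vertices contains a clique of size `k` or an independent set of size `k`).
Then every finite simple graph with at least `r` edges contains a matching of size `k`
(`k` pairwise vertex-disjoint edges) or a vertex of degree at least `k` (a star
`K_{1,k}`). -/
theorem statement18 {V : Type*} [Fintype V] [DecidableEq V]
    (G : SimpleGraph V) [DecidableRel G.Adj] (k r : ℕ) (hk : 4 ≤ k) (hr : 0 < r)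
    (hRamsey : ∀ G' : SimpleGraph (Fin r),
      (∃ s : Finset (Fin r), s.card = k ∧ G'.IsClique ↑s) ∨
      (∃ s : Finset (Fin r), s.card = k ∧
        (↑s : Set (Fin r)).Pairwise fun a b => ¬ G'.Adj a b))
    (hG : r ≤ G.edgeFinset.card) :
    (∃ M : Finset (Sym2 V), M ⊆ G.edgeFinset ∧ M.card = k ∧
        (↑M : Set (Sym2 V)).Pairwise fun e f => ∀ v : V, v ∈ e → v ∉ f) ∨
    (∃ v : V, k ≤ G.degree v) := by
  classical
  obtain ⟨S, hS, hScard⟩ := Finset.exists_subset_card_eq hG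
  let φ : Fin r ↪ Sym2 V :=
    (S.equivFinOfCardEq hScard).symm.toEmbedding.trans (Function.Embedding.subtype _)
  have hφ : ∀ i, φ i ∈ G.edgeFinset := fun i =>
    hS ((S.equivFinOfCardEq hScard).symm i).2
  have hsub : ∀ s : Finset (Fin r), s.map φ ⊆ G.edgeFinset := by
    intro s e he
    obtain ⟨i, -, rfl⟩ := Finset.mem_map.mp he
    exact hφ i
  let H : SimpleGraph (Fin r) :=
    { Adj := fun i j => i ≠ j ∧ ∃ v, v ∈ φ i ∧ v ∈ φ j
      symm := ⟨fun i j h => ⟨h.1.symm, h.2.imp fun v hv => hv.symm⟩⟩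
      loopless := ⟨fun i h => h.1 rfl⟩ }
  rcases hRamsey H with ⟨s, hs, hcl⟩ | ⟨s, hs, hind⟩
  · right
    obtain ⟨v, hv⟩ := exists_common_vertex (s.map φ) (by simpa [hs] using hk) (by
      intro e he f hf
      obtain ⟨i, hi, rfl⟩ := Finset.mem_map.mp he
      obtain ⟨j, hj, rfl⟩ := Finset.mem_map.mp hf
      by_cases hij : i = j
      · subst hij
        exact ⟨(φ i).out.1, Sym2.out_fst_mem _, Sym2.out_fst_mem _⟩
      · exact (hcl hi hj hij).2)
    refine ⟨v, ?_⟩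
    rw [← G.card_incidenceFinset_eq_degree, ← hs, ← Finset.card_map φ]
    refine Finset.card_le_card fun e he => ?_
    rw [SimpleGraph.mem_incidenceFinset]
    exact ⟨SimpleGraph.mem_edgeFinset.mp (hsub s he), hv e he⟩
  · left
    refine ⟨s.map φ, hsub s, by simpa using hs, ?_⟩
    intro e he f hf hef v hve hvf
    obtain ⟨i, hi, rfl⟩ := Finset.mem_map.mp he
    obtain ⟨j, hj, rfl⟩ := Finset.mem_map.mp hf
    have hij : i ≠ j := fun h => hef (congrArg φ h)
    exact hind hi hj hij ⟨hij, v, hve, hvf⟩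
end
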